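/- There exists n₀ such that the following holds for every n ≥ n₀: let k be an integer with n/2 − √n ≤ k ≤ n/2 + √n, let m be an integer with 1 ≤ m ≤ k², and let F ⊆ {S ⊆ [n] : |S| = k} with |F| = C(n,k) − m. Then (i) the number of sets G ⊆ [n] with |G| = k+1 such that |{A ∈ F : A ⊊ G}| < k + 1 − 2√m is at most √m, and (ii) the number of sets G ⊆ [n] with |G| ≥ k+1 such that |{A ∈ F : A ⊊ G}| < k + 1 − 2√m is at most 2√m. -/

import Mathlib

attribute [local instance] Classical.propDecidable

def levelFam (n k : ℕ) : Finset (Finset (Fin n)) :=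
  Finset.univ.filter (fun S => S.card = k)

/-!
Put `s = √m` and call a set bad if it contains fewer than `k + 1 - 2s` members of `F`. A
`(k+1)`-set has `k + 1` subsets of size `k`, so it is bad only if more than `2s` of them are missing
from `F`. Two distinct `(k+1)`-sets share at most one `k`-subset, so `t = ⌊s⌋ + 1` bad ones would
account for more than `2st - t(t-1)/2` missing sets; as `s < t ≤ s + 1`, this is at least `s² = m`,
and `3s/2` in place of `2s` already suffices. A set with at least `k + 2` elements has at least
`(k+2)(k+1)/2` subsets of size `k`, too many for the `m` missing ones to make it bad.
-/

section

open Finset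

theorem sum_card_le_card_biUnion_add_choose_two {ι β : Type*} [DecidableEq β] {T : Finset ι}
    {f : ι → Finset β} {r : ℕ} (hf : (T : Set ι).Pairwise fun i j => #(f i ∩ f j) ≤ r) :
    ∑ i ∈ T, #(f i) ≤ #(T.biUnion f) + r * (#T).choose 2 := by
  induction T using Finset.induction_on with
  | empty => simp
  | insert a T ha ih =>
    have sum_le := ih (hf.mono (by simp))
    have overlap_le : #(f a ∩ T.biUnion f) ≤ r * #T := by
      rw [inter_biUnion, mul_comm]
      exact card_biUnion_le_card_mul _ _ _ fun j hj =>
        hf (mem_insert_self a T) (mem_insert_of_mem hj) (ne_of_mem_of_not_mem hj ha).symm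
    have union_add_inter := card_union_add_card_inter (f a) (T.biUnion f)
    have choose_two_succ : (#T + 1).choose 2 = #T + (#T).choose 2 := by
      rw [Nat.choose_succ_succ', Nat.choose_one_right]
    rw [sum_insert ha, biUnion_insert, card_insert_of_notMem ha, choose_two_succ, mul_add]
    omega

theorem card_le_of_pairwise_card_inter_le_one {ι β : Type*} [DecidableEq β] {T : Finset ι}
    {f : ι → Finset β} {M : Finset β} {s : ℝ} (hs : 0 ≤ s) (hM : (#M : ℝ) ≤ s ^ 2)
    (hsub : ∀ i ∈ T, f i ⊆ M) (hcard : ∀ i ∈ T, 3 / 2 * s < #(f i))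
    (hf : (T : Set ι).Pairwise fun i j => #(f i ∩ f j) ≤ 1) :
    (#T : ℝ) ≤ s := by
  by_contra! hlt
  obtain ⟨U, hUT, hU⟩ := exists_subset_card_eq (Nat.succ_le_of_lt ((Nat.floor_lt hs).mpr hlt))
  have lt_card : s < #U := by
    rw [hU]
    exact_mod_cast Nat.lt_succ_floor s
  have card_le : (#U : ℝ) - 1 ≤ s := by
    rw [hU, Nat.cast_succ, add_sub_cancel_right]
    exact Nat.floor_le hs
  have lt_sum : #U * (3 / 2 * s) < ∑ i ∈ U, (#(f i) : ℝ) := by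
    rw [← nsmul_eq_mul, ← sum_const]
    exact sum_lt_sum_of_nonempty (card_pos.mp (hU ▸ Nat.succ_pos _)) fun i hi => hcard i (hUT hi)
  have sum_le : ∑ i ∈ U, (#(f i) : ℝ) ≤ #M + (#U : ℝ) * (#U - 1) / 2 := by
    rw [← Nat.cast_choose_two]
    have sum_le_biUnion := sum_card_le_card_biUnion_add_choose_two (hf.mono (coe_subset.mpr hUT))
    have biUnion_le : #(U.biUnion f) ≤ #M :=
      card_le_card (biUnion_subset.mpr fun i hi => hsub i (hUT hi))
    exact_mod_cast (by omega : ∑ i ∈ U, #(f i) ≤ #M + (#U).choose 2)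
  have : #U * (#U - 1) ≤ #U * s := by gcongr
  have : s ^ 2 ≤ #U * s := by rw [sq]; gcongr
  linarith

variable {α : Type*} [DecidableEq α] {k m : ℕ} {F : Finset (Finset α)} {G H : Finset α}

theorem card_inter_lt_of_ne_of_card_eq (hne : G ≠ H) (hcard : #G = #H) : #(G ∩ H) < #G :=
  card_lt_card <| inter_subset_left.ssubset_of_ne fun h =>
    hne (eq_of_subset_of_card_le (inter_eq_left.mp h) hcard.ge)

theorem card_filter_ssubset_inter_le_one (hF : (F : Set (Finset α)).Sized k)
    (hGH : #(G ∩ H) ≤ k) : #({A ∈ F | A ⊂ G} ∩ {A ∈ F | A ⊂ H}) ≤ 1 := by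
  have eq_inter : ∀ A ∈ {A ∈ F | A ⊂ G} ∩ {A ∈ F | A ⊂ H}, A = G ∩ H := by
    intro A hA
    simp only [mem_inter, mem_filter] at hA
    obtain ⟨⟨hAF, hAG⟩, -, hAH⟩ := hA
    exact eq_of_subset_of_card_le (subset_inter hAG.subset hAH.subset) (hGH.trans_eq (hF hAF).symm)
  exact card_le_one.mpr fun A hA B hB => (eq_inter A hA).trans (eq_inter B hB).symm

variable [Fintype α]

/-- The `k`-subsets of the ground set that do not belong to the family `F`. -/
def missingSets (k : ℕ) (F : Finset (Finset α)) : Finset (Finset α) :=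
  powersetCard k univ \ F

theorem sized_missingSets : (missingSets k F : Set (Finset α)).Sized k :=
  subset_powersetCard_univ_iff.mp sdiff_subset

theorem card_missingSets_of_card_add (hF : (F : Set (Finset α)).Sized k)
    (hcard : #F + m = (Fintype.card α).choose k) : #(missingSets k F) = m := by
  rw [missingSets, card_sdiff_of_subset (subset_powersetCard_univ_iff.mpr hF), card_powersetCard,
    card_univ, ← hcard, Nat.add_sub_cancel_left]

theorem filter_ssubset_powersetCard_univ (hG : k < #G) :
    {A ∈ powersetCard k (univ : Finset α) | A ⊂ G} = powersetCard k G := by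
  ext A
  simp only [mem_filter, mem_powersetCard, subset_univ, true_and]
  refine ⟨fun ⟨hA, hAG⟩ => ⟨hAG.subset, hA⟩, fun ⟨hAG, hA⟩ => ⟨hA, hAG.ssubset_of_ne ?_⟩⟩
  rintro rfl
  exact hG.ne' hA

theorem card_filter_ssubset_add_missingSets (hF : (F : Set (Finset α)).Sized k) (hG : k < #G) :
    #{A ∈ F | A ⊂ G} + #{A ∈ missingSets k F | A ⊂ G} = (#G).choose k := by
  rw [missingSets, ← card_union_of_disjoint (disjoint_filter_filter disjoint_sdiff),
    ← filter_union, union_sdiff_of_subset (subset_powersetCard_univ_iff.mpr hF),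
    filter_ssubset_powersetCard_univ hG, card_powersetCard]

theorem le_card_filter_ssubset_of_add_two_le_card (hF : (F : Set (Finset α)).Sized k)
    (hG : k + 2 ≤ #G) :
    (k : ℝ) + 1 - 3 / 2 * √(#(missingSets k F)) ≤ #{A ∈ F | A ⊂ G} := by
  have choose_le : (k + 2).choose 2 ≤ #{A ∈ F | A ⊂ G} + #(missingSets k F) := calc
    (k + 2).choose 2 = (k + 2).choose k := Nat.choose_symm_add.symm
    _ ≤ (#G).choose k := Nat.choose_le_choose k hG
    _ = #{A ∈ F | A ⊂ G} + #{A ∈ missingSets k F | A ⊂ G} :=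
      (card_filter_ssubset_add_missingSets hF (by omega)).symm
    _ ≤ _ := by gcongr; exact filter_subset _ _
  have choose_le_real :
      ((k : ℝ) + 2) * (k + 1) / 2 ≤ #{A ∈ F | A ⊂ G} + √(#(missingSets k F)) ^ 2 := by
    rw [Real.sq_sqrt (Nat.cast_nonneg _)]
    have := (Nat.cast_le (α := ℝ)).mpr choose_le
    rw [Nat.cast_choose_two] at this
    push_cast at this
    linarith
  set s := √(#(missingSets k F))
  have s_nonneg : 0 ≤ s := Real.sqrt_nonneg _
  by_contra! hbad
  have s_lt : 3 / 2 * s < k + 1 := by linarith [Nat.cast_nonneg (α := ℝ) #{A ∈ F | A ⊂ G}]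
  have lt_s : (k : ℝ) * (k + 1) / 2 < s * (s - 3 / 2) := by linarith
  have s_mul_le : s * (s - 3 / 2) ≤ 2 / 3 * (k + 1) * (2 / 3 * k) := calc
    s * (s - 3 / 2) ≤ s * (2 / 3 * k) := by gcongr; linarith
    _ ≤ 2 / 3 * (k + 1) * (2 / 3 * k) := by gcongr; linarith
  nlinarith [Nat.cast_nonneg (α := ℝ) k]

theorem few_bad_supersets_sharp_general (hF : (F : Set (Finset α)).Sized k)
    (hcard : #F + m = (Fintype.card α).choose k) :
    (#{G : Finset α | k + 1 ≤ #G ∧ (#{A ∈ F | A ⊂ G} : ℝ) < k + 1 - 3 / 2 * √m} : ℝ) ≤ √m := by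
  obtain rfl := card_missingSets_of_card_add hF hcard
  set bad : Finset (Finset α) :=
    {G | k + 1 ≤ #G ∧ (#{A ∈ F | A ⊂ G} : ℝ) < k + 1 - 3 / 2 * √(#(missingSets k F))}
  have card_eq : ∀ G ∈ bad, #G = k + 1 := by
    intro G hG
    obtain ⟨hkG, hlt⟩ := (mem_filter.mp hG).2
    by_contra hne
    exact hlt.not_ge (le_card_filter_ssubset_of_add_two_le_card hF (by omega))
  refine card_le_of_pairwise_card_inter_le_one (M := missingSets k F)
    (f := fun G => {A ∈ missingSets k F | A ⊂ G}) (Real.sqrt_nonneg _)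
    (Real.sq_sqrt (Nat.cast_nonneg _)).ge (fun G _ => filter_subset _ _) ?many_missing ?overlap
  case many_missing =>
    intro G hG
    have hsplit := card_filter_ssubset_add_missingSets hF (card_eq G hG).ge
    rw [card_eq G hG, Nat.choose_succ_self_right] at hsplit
    have hsplit_real : (#{A ∈ F | A ⊂ G} : ℝ) + #{A ∈ missingSets k F | A ⊂ G} = k + 1 := by
      exact_mod_cast hsplit
    linarith [(mem_filter.mp hG).2.2]
  case overlap =>
    intro G hG H hH hne
    have hlt := card_inter_lt_of_ne_of_card_eq hne ((card_eq G hG).trans (card_eq H hH).symm)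
    rw [card_eq G hG] at hlt
    exact card_filter_ssubset_inter_le_one sized_missingSets (Nat.le_of_lt_succ hlt)

end

/-- If `F` consists of all but `m` of the `k`-subsets of `[n]` (with `k` close to `n/2` and
`1 ≤ m ≤ k²`), then (i) at most `√m` sets of size `k+1`, and (ii) at most `2√m` sets of size
`≥ k+1`, contain fewer than `k+1−2√m` members of `F`. -/
theorem few_bad_supersets_sharp :
    ∃ n₀ : ℕ, ∀ n : ℕ, n₀ ≤ n → ∀ k m : ℕ,
      (n : ℝ) / 2 - Real.sqrt n ≤ (k : ℝ) → (k : ℝ) ≤ (n : ℝ) / 2 + Real.sqrt n →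
      1 ≤ m → m ≤ k ^ 2 →
      ∀ F : Finset (Finset (Fin n)), F ⊆ levelFam n k → F.card + m = n.choose k →
      (((Finset.univ.filter (fun G : Finset (Fin n) =>
            G.card = k + 1 ∧
              ((F.filter (fun A => A ⊂ G)).card : ℝ) < (k : ℝ) + 1 - 2 * Real.sqrt m)).card : ℝ)
          ≤ Real.sqrt m) ∧
      (((Finset.univ.filter (fun G : Finset (Fin n) =>
            k + 1 ≤ G.card ∧
              ((F.filter (fun A => A ⊂ G)).card : ℝ) < (k : ℝ) + 1 - 2 * Real.sqrt m)).card : ℝ)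
          ≤ 2 * Real.sqrt m) := by
  refine ⟨0, fun n _ k m _ _ _ _ F hF hcard => ?_⟩
  have hsqrt := Real.sqrt_nonneg m
  have hbound := few_bad_supersets_sharp_general (F := F) (k := k) (m := m)
    (fun A hA => (Finset.mem_filter.mp (hF hA)).2) (by rwa [Fintype.card_fin])
  refine ⟨le_trans ?_ hbound, le_trans ?_ (hbound.trans (by linarith))⟩ <;>
    exact Nat.cast_le.mpr <| Finset.card_le_card <|
      Finset.monotone_filter_right _ fun G _ ⟨hG, hlt⟩ => ⟨by omega, by linarith [hlt]⟩
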